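/- arXiv:1403.3489 — 3 statements merged into one kernel-verified Lean document; each statement's English description precedes it below -/
import Mathlib

section
/- Let C ⊆ ℝ denote the ternary Cantor set and let α > 1 be a real number. Then C ∪ (C + α) is Lipschitz equivalent to C. -/
/-- Two subsets `X`, `Y` of (possibly different) metric spaces are Lipschitz
equivalent if there are a bijection `f : X → Y` and a constant `L ≥ 1` with
`L⁻¹ * dist x y ≤ dist (f x) (f y) ≤ L * dist x y` for all `x y ∈ X`. -/
def LipschitzEquivalent {E F : Type*} [MetricSpace E] [MetricSpace F]
    (X : Set E) (Y : Set F) : Prop :=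
  ∃ (f : X → Y) (L : ℝ), 1 ≤ L ∧ Function.Bijective f ∧
    ∀ x y : X, L⁻¹ * dist (x : E) (y : E) ≤ dist (f x : F) (f y : F) ∧
      dist (f x : F) (f y : F) ≤ L * dist (x : E) (y : E)

/-!
The Cantor set is the disjoint union of two scaled copies of itself, and for disjoint compact
pieces Lipschitz equivalences can be glued, because a locally Lipschitz map on a compact set is
Lipschitz. Hence every disjoint union of two sets that are Lipschitz equivalent to the Cantor set
is again Lipschitz equivalent to it.
-/

open Set Topology
open scoped NNReal

theorem exists_lipschitzOnWith_union_of_disjoint {α β : Type*} [MetricSpace α]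
    [PseudoMetricSpace β] {f : α → β} {s t : Set α} {K K' : ℝ≥0} (hs : IsCompact s)
    (ht : IsCompact t) (hst : Disjoint s t) (hfs : LipschitzOnWith K f s)
    (hft : LipschitzOnWith K' f t) : ∃ L, LipschitzOnWith L f (s ∪ t) := by
  have mem_nhdsWithin_union {u v : Set α} (hv : IsClosed v) (huv : Disjoint u v) {x : α}
      (hx : x ∈ u) : u ∈ 𝓝[u ∪ v] x := by
    have hvx : vᶜ ∈ 𝓝 x := hv.isOpen_compl.mem_nhds (huv.notMem_of_mem_left hx)
    filter_upwards [self_mem_nhdsWithin, mem_nhdsWithin_of_mem_nhds hvx] with y hy hyv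
    exact hy.resolve_right hyv
  refine LocallyLipschitzOn.exists_lipschitzOnWith_of_compact (hs.union ht) ?_
  rintro x (hx | hx)
  · exact ⟨K, s, mem_nhdsWithin_union ht.isClosed hst hx, hfs⟩
  · exact ⟨K', t, union_comm t s ▸ mem_nhdsWithin_union hs.isClosed hst.symm hx, hft⟩

section UnionCongr

variable {E F : Type*} {X₁ X₂ : Set E} {Y₁ Y₂ : Set F}

/-- The bijection between disjoint unions that restricts to given bijections of the pieces. -/
noncomputable def unionCongr (hX : Disjoint X₁ X₂) (hY : Disjoint Y₁ Y₂) (e₁ : X₁ ≃ Y₁)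
    (e₂ : X₂ ≃ Y₂) : ↥(X₁ ∪ X₂) ≃ ↥(Y₁ ∪ Y₂) :=
  open Classical in
  (Equiv.Set.union hX).trans ((e₁.sumCongr e₂).trans (Equiv.Set.union hY).symm)

theorem unionCongr_symm (hX : Disjoint X₁ X₂) (hY : Disjoint Y₁ Y₂) (e₁ : X₁ ≃ Y₁)
    (e₂ : X₂ ≃ Y₂) : (unionCongr hX hY e₁ e₂).symm = unionCongr hY hX e₁.symm e₂.symm :=
  rfl

theorem coe_unionCongr_of_mem_left (hX : Disjoint X₁ X₂) (hY : Disjoint Y₁ Y₂) (e₁ : X₁ ≃ Y₁)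
    (e₂ : X₂ ≃ Y₂) {x : ↥(X₁ ∪ X₂)} (hx : (x : E) ∈ X₁) :
    (unionCongr hX hY e₁ e₂ x : F) = e₁ ⟨x, hx⟩ := by
  classical
  simp [unionCongr, Equiv.Set.union_apply_left hX hx]

theorem coe_unionCongr_of_mem_right (hX : Disjoint X₁ X₂) (hY : Disjoint Y₁ Y₂) (e₁ : X₁ ≃ Y₁)
    (e₂ : X₂ ≃ Y₂) {x : ↥(X₁ ∪ X₂)} (hx : (x : E) ∈ X₂) :
    (unionCongr hX hY e₁ e₂ x : F) = e₂ ⟨x, hx⟩ := by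
  classical
  simp [unionCongr, Equiv.Set.union_apply_right hX hx]

theorem exists_lipschitzWith_unionCongr [MetricSpace E] [MetricSpace F] {e₁ : X₁ ≃ Y₁}
    {e₂ : X₂ ≃ Y₂} {K₁ K₂ : ℝ≥0} (hX₁ : IsCompact X₁) (hX₂ : IsCompact X₂)
    (hX : Disjoint X₁ X₂) (hY : Disjoint Y₁ Y₂) (he₁ : LipschitzWith K₁ e₁)
    (he₂ : LipschitzWith K₂ e₂) : ∃ K, LipschitzWith K (unionCongr hX hY e₁ e₂) := by
  have : CompactSpace ↥(X₁ ∪ X₂) := isCompact_iff_compactSpace.mp (hX₁.union hX₂)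
  let s₁ : Set ↥(X₁ ∪ X₂) := Subtype.val ⁻¹' X₁
  let s₂ : Set ↥(X₁ ∪ X₂) := Subtype.val ⁻¹' X₂
  have hs₁ : IsCompact s₁ := (hX₁.isClosed.preimage continuous_subtype_val).isCompact
  have hs₂ : IsCompact s₂ := (hX₂.isClosed.preimage continuous_subtype_val).isCompact
  have cover : s₁ ∪ s₂ = univ := eq_univ_of_forall Subtype.property
  have lipschitz₁ : LipschitzOnWith K₁ (unionCongr hX hY e₁ e₂) s₁ := fun x hx y hy ↦ by
    simpa only [Subtype.edist_eq, coe_unionCongr_of_mem_left hX hY e₁ e₂ hx,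
      coe_unionCongr_of_mem_left hX hY e₁ e₂ hy] using he₁ ⟨x, hx⟩ ⟨y, hy⟩
  have lipschitz₂ : LipschitzOnWith K₂ (unionCongr hX hY e₁ e₂) s₂ := fun x hx y hy ↦ by
    simpa only [Subtype.edist_eq, coe_unionCongr_of_mem_right hX hY e₁ e₂ hx,
      coe_unionCongr_of_mem_right hX hY e₁ e₂ hy] using he₂ ⟨x, hx⟩ ⟨y, hy⟩
  simpa only [cover, lipschitzOnWith_univ] using
    exists_lipschitzOnWith_union_of_disjoint hs₁ hs₂ (hX.preimage _) lipschitz₁ lipschitz₂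

end UnionCongr

theorem lipschitzEquivalent_iff {E F : Type*} [MetricSpace E] [MetricSpace F] {X : Set E}
    {Y : Set F} : LipschitzEquivalent X Y ↔
      ∃ e : X ≃ Y, (∃ K, LipschitzWith K e) ∧ ∃ K, LipschitzWith K e.symm := by
  constructor
  · rintro ⟨f, L, hL, hf, hfL⟩
    lift L to ℝ≥0 using zero_le_one.trans hL
    have hL₀ : (0 : ℝ) < L := zero_lt_one.trans_le hL
    have hf_anti : AntilipschitzWith L f :=
      .of_le_mul_dist fun x y ↦ (inv_mul_le_iff₀ hL₀).mp (hfL x y).1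
    let e := Equiv.ofBijective f hf
    exact ⟨e, ⟨L, .of_dist_le_mul fun x y ↦ (hfL x y).2⟩,
      ⟨L, hf_anti.to_rightInverse e.right_inv⟩⟩
  · rintro ⟨e, ⟨K, hK⟩, K', hK'⟩
    let L : ℝ≥0 := max 1 (max K K')
    have he : LipschitzWith L e := hK.weaken (by simp [L])
    have he_anti : AntilipschitzWith L e :=
      (hK'.weaken (by simp [L])).to_rightInverse e.left_inv
    have hL : (1 : ℝ) ≤ L := mod_cast le_max_left 1 (max K K')
    exact ⟨e, L, hL, e.bijective, fun x y ↦
      ⟨(inv_mul_le_iff₀ (zero_lt_one.trans_le hL)).mpr (he_anti.le_mul_dist x y),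
        he.dist_le_mul x y⟩⟩

namespace LipschitzEquivalent

variable {E F G : Type*} [MetricSpace E] [MetricSpace F] [MetricSpace G]

theorem refl (X : Set E) : LipschitzEquivalent X X :=
  lipschitzEquivalent_iff.mpr ⟨.refl X, ⟨1, .id⟩, ⟨1, .id⟩⟩

theorem symm {X : Set E} {Y : Set F} (h : LipschitzEquivalent X Y) :
    LipschitzEquivalent Y X :=
  let ⟨e, he, he'⟩ := lipschitzEquivalent_iff.mp h
  lipschitzEquivalent_iff.mpr ⟨e.symm, he', he⟩

theorem trans {X : Set E} {Y : Set F} {Z : Set G} (hXY : LipschitzEquivalent X Y)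
    (hYZ : LipschitzEquivalent Y Z) : LipschitzEquivalent X Z :=
  let ⟨e, ⟨_, he⟩, ⟨_, he'⟩⟩ := lipschitzEquivalent_iff.mp hXY
  let ⟨g, ⟨_, hg⟩, ⟨_, hg'⟩⟩ := lipschitzEquivalent_iff.mp hYZ
  lipschitzEquivalent_iff.mpr ⟨e.trans g, ⟨_, hg.comp he⟩, ⟨_, he'.comp hg'⟩⟩

theorem isCompact {X : Set E} {Y : Set F} (h : LipschitzEquivalent X Y) (hX : IsCompact X) :
    IsCompact Y := by
  obtain ⟨e, ⟨_, he⟩, -⟩ := lipschitzEquivalent_iff.mp h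
  have : CompactSpace X := isCompact_iff_compactSpace.mp hX
  exact isCompact_iff_compactSpace.mpr (e.surjective.compactSpace he.continuous)

theorem union {X₁ X₂ : Set E} {Y₁ Y₂ : Set F} (h₁ : LipschitzEquivalent X₁ Y₁)
    (h₂ : LipschitzEquivalent X₂ Y₂) (hX₁ : IsCompact X₁) (hX₂ : IsCompact X₂)
    (hX : Disjoint X₁ X₂) (hY : Disjoint Y₁ Y₂) :
    LipschitzEquivalent (X₁ ∪ X₂) (Y₁ ∪ Y₂) := by
  have hY₁ : IsCompact Y₁ := h₁.isCompact hX₁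
  have hY₂ : IsCompact Y₂ := h₂.isCompact hX₂
  obtain ⟨e₁, ⟨_, he₁⟩, ⟨_, he₁'⟩⟩ := lipschitzEquivalent_iff.mp h₁
  obtain ⟨e₂, ⟨_, he₂⟩, ⟨_, he₂'⟩⟩ := lipschitzEquivalent_iff.mp h₂
  refine lipschitzEquivalent_iff.mpr ⟨unionCongr hX hY e₁ e₂,
    exists_lipschitzWith_unionCongr hX₁ hX₂ hX hY he₁ he₂, ?_⟩
  rw [unionCongr_symm]
  exact exists_lipschitzWith_unionCongr hY₁ hY₂ hY hX he₁' he₂'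

theorem image_of_dist_eq {f : E → F} {r : ℝ≥0} (hr : r ≠ 0)
    (hf : ∀ x y, dist (f x) (f y) = r * dist x y) (X : Set E) :
    LipschitzEquivalent X (f '' X) := by
  have lipschitz : LipschitzWith r f := .of_dist_le_mul fun x y ↦ (hf x y).le
  have antilipschitz : AntilipschitzWith r⁻¹ f := .of_le_mul_dist fun x y ↦ by
    rw [hf, NNReal.coe_inv, inv_mul_cancel_left₀ (NNReal.coe_ne_zero.mpr hr)]
  let e : X ≃ f '' X := Equiv.Set.image f X antilipschitz.injective
  have e_antilipschitz : AntilipschitzWith r⁻¹ e := fun x y ↦ antilipschitz x y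
  exact lipschitzEquivalent_iff.mpr ⟨e, ⟨r, fun x y ↦ lipschitz x y⟩,
    ⟨r⁻¹, e_antilipschitz.to_rightInverse e.right_inv⟩⟩

end LipschitzEquivalent

theorem lipschitzEquivalent_image_div_three (X : Set ℝ) :
    LipschitzEquivalent X ((· / 3) '' X) :=
  .image_of_dist_eq (r := 3⁻¹) (by simp) (fun x y ↦ by
    simp [Real.dist_eq, ← sub_div, abs_div, inv_mul_eq_div]) X

theorem lipschitzEquivalent_image_two_add_div_three (X : Set ℝ) :
    LipschitzEquivalent X ((fun x ↦ (2 + x) / 3) '' X) :=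
  .image_of_dist_eq (r := 3⁻¹) (by simp) (fun x y ↦ by
    simp [Real.dist_eq, ← sub_div, abs_div, inv_mul_eq_div]) X

theorem disjoint_image_div_three_image_two_add_div_three {X : Set ℝ} (hX : X ⊆ Icc 0 1) :
    Disjoint ((· / 3) '' X) ((fun x ↦ (2 + x) / 3) '' X) := by
  refine disjoint_image_image fun x hx y hy hxy ↦ ?_
  linarith [(hX hx).2, (hX hy).1]

theorem lipschitzEquivalent_image_add_right (X : Set ℝ) (α : ℝ) :
    LipschitzEquivalent X ((· + α) '' X) :=
  .image_of_dist_eq one_ne_zero (fun x y ↦ by simp) X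

theorem disjoint_image_add_right {X : Set ℝ} (hX : X ⊆ Icc 0 1) {α : ℝ} (hα : 1 < |α|) :
    Disjoint X ((· + α) '' X) := by
  rw [disjoint_right]
  rintro _ ⟨x, hx, rfl⟩ hxα
  have : dist (x + α) x ≤ 1 := Real.dist_le_of_mem_Icc_01 (hX hxα) (hX hx)
  rw [dist_self_add_left, Real.norm_eq_abs] at this
  exact hα.not_ge this

theorem stmt7_general {E : Type*} [MetricSpace E] {X Y : Set E}
    (hX : LipschitzEquivalent X cantorSet) (hY : LipschitzEquivalent Y cantorSet)
    (hXY : Disjoint X Y) : LipschitzEquivalent (X ∪ Y) cantorSet := by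
  rw [cantorSet_eq_union_halves]
  exact (hX.trans (lipschitzEquivalent_image_div_three cantorSet)).union
    (hY.trans (lipschitzEquivalent_image_two_add_div_three cantorSet))
    (hX.symm.isCompact isCompact_cantorSet) (hY.symm.isCompact isCompact_cantorSet) hXY
    (disjoint_image_div_three_image_two_add_div_three cantorSet_subset_unitInterval)

theorem stmt7 (α : ℝ) (hα : 1 < α) :
    LipschitzEquivalent (cantorSet ∪ (fun x => x + α) '' cantorSet) cantorSet :=
  stmt7_general (.refl cantorSet) (lipschitzEquivalent_image_add_right cantorSet α).symm
    (disjoint_image_add_right cantorSet_subset_unitInterval (hα.trans_le (le_abs_self α)))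
end

section
/- Let C ⊆ ℝ denote the ternary Cantor set and let α be a rational number with 0 < α ≤ 1. Then C ∪ (C + α) is Lipschitz equivalent to C. -/
/-!
Write `α = p / q`. Up to scaling, `C ∪ (C + α)` is `q * C + {0, p}`, and `C` itself is
`q * C + {0, 0}`. Since `q * C = (q * C + {0, 2 * q}) / 3`, a set `q * C + {a, b}` equals
`(q * C + {3 * a, 3 * b, 3 * a + 2 * q, 3 * b + 2 * q}) / 3`. Unless `3 * |a - b| = q`, these four
digits form two pairs of bounded diameter at distance more than `q`, so the set splits into two
pieces of the same kind separated by a definite proportion of the scale. In the exceptional case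
the eight digits of the second refinement form four such pairs. Integrality of the digits makes the
proportion uniform, so both sets are limits of binary trees whose diameters and gaps at depth `n`
are comparable to `3 ^ (-n)`, and hence both are bi-Lipschitz to one ultrametric on `{0, 1} ^ ℕ`.
-/

open Set Filter Topology PiNat

section Coding

variable {β ι E F : Type*} [MetricSpace E] [MetricSpace F]

/-- `X` and `Y` are at distance at least `δ` from each other. -/
def SeparatedBy (δ : ℝ) (X Y : Set E) : Prop :=
  ∀ x ∈ X, ∀ y ∈ Y, δ ≤ dist x y

instance (δ : ℝ) : Std.Symm (SeparatedBy (E := E) δ) where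
  symm _ _ h y hy x hx := dist_comm x y ▸ h x hx y hy

theorem SeparatedBy.mono {δ ε : ℝ} {X Y : Set E} (h : SeparatedBy ε X Y) (hδ : δ ≤ ε) :
    SeparatedBy δ X Y :=
  fun x hx y hy ↦ hδ.trans (h x hx y hy)

/-- `f` is bi-Lipschitz for the ultrametric on sequences in which two sequences first differing at
index `n` are at distance `s n`. -/
def IsScaledCoding (s : ℕ → ℝ) (f : (ℕ → β) → E) : Prop :=
  ∃ c d : ℝ, 0 < d ∧ ∀ u v, u ≠ v →
    d * s (firstDiff u v) ≤ dist (f u) (f v) ∧ dist (f u) (f v) ≤ c * s (firstDiff u v)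

theorem IsScaledCoding.injective {s : ℕ → ℝ} {f : (ℕ → β) → E} (hf : IsScaledCoding s f)
    (hs : ∀ n, 0 < s n) : Function.Injective f := by
  obtain ⟨c, d, hd, hf⟩ := hf
  intro u v huv
  by_contra hne
  have hpos : 0 < dist (f u) (f v) := (mul_pos hd (hs _)).trans_le (hf u v hne).1
  exact (dist_pos.1 hpos) huv

theorem IsScaledCoding.exists_dist_le_mul_dist {s : ℕ → ℝ} {f : (ℕ → β) → E} {g : (ℕ → β) → F}
    (hf : IsScaledCoding s f) (hg : IsScaledCoding s g) (hs : ∀ n, 0 < s n) :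
    ∃ K : ℝ, ∀ u v, dist (g u) (g v) ≤ K * dist (f u) (f v) := by
  obtain ⟨_, d, hd, hf⟩ := hf
  obtain ⟨c, _, _, hg⟩ := hg
  refine ⟨|c| / d, fun u v ↦ ?_⟩
  rcases eq_or_ne u v with rfl | huv
  · simp only [dist_self, mul_zero, le_refl]
  calc dist (g u) (g v) ≤ c * s (firstDiff u v) := (hg u v huv).2
    _ ≤ |c| * s (firstDiff u v) := by gcongr; exacts [(hs _).le, le_abs_self c]
    _ = |c| / d * (d * s (firstDiff u v)) := by field_simp
    _ ≤ |c| / d * dist (f u) (f v) := by gcongr; exact (hf u v huv).1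

theorem lipschitzEquivalent_range {f : ι → E} {g : ι → F} (hf : Function.Injective f)
    (hg : Function.Injective g) {K K' : ℝ} (hK : ∀ u v, dist (g u) (g v) ≤ K * dist (f u) (f v))
    (hK' : ∀ u v, dist (f u) (f v) ≤ K' * dist (g u) (g v)) :
    LipschitzEquivalent (range f) (range g) := by
  let e : range f ≃ range g := (Equiv.ofInjective f hf).symm.trans (Equiv.ofInjective g hg)
  let L := max 1 (max K K')
  have hL : 1 ≤ L := le_max_left _ _
  refine ⟨e, L, hL, e.bijective, ?_⟩
  rintro ⟨_, u, rfl⟩ ⟨_, v, rfl⟩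
  simp only [e, Equiv.trans_apply, Equiv.ofInjective_symm_apply, Equiv.ofInjective_apply]
  rw [inv_mul_le_iff₀ (one_pos.trans_le hL)]
  exact ⟨(hK' u v).trans (by gcongr; exact (le_max_right _ _).trans (le_max_right _ _)),
    (hK u v).trans (by gcongr; exact (le_max_left _ _).trans (le_max_right _ _))⟩

theorem IsScaledCoding.lipschitzEquivalent_range {s : ℕ → ℝ} {f : (ℕ → β) → E}
    {g : (ℕ → β) → F} (hf : IsScaledCoding s f) (hg : IsScaledCoding s g) (hs : ∀ n, 0 < s n) :
    LipschitzEquivalent (range f) (range g) := by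
  obtain ⟨K, hK⟩ := hf.exists_dist_le_mul_dist hg hs
  obtain ⟨K', hK'⟩ := hg.exists_dist_le_mul_dist hf hs
  exact _root_.lipschitzEquivalent_range (hf.injective hs) (hg.injective hs) hK hK'

/-- A `β`-scheme of compact sets (in the sense of `CantorScheme`) whose sets at depth `n` have
diameter at most `c * s n` and split into pieces at mutual distance at least `d * s n`. -/
structure IsScaledScheme (s : ℕ → ℝ) (c d : ℝ) (A : List β → Set E) : Prop where
  nonempty (l : List β) : (A l).Nonempty
  isCompact (l : List β) : IsCompact (A l)
  dist_le (l : List β) : ∀ x ∈ A l, ∀ y ∈ A l, dist x y ≤ c * s l.length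
  iUnion_cons (l : List β) : ⋃ b, A (b :: l) = A l
  separated (l : List β) : Pairwise (Function.onFun (SeparatedBy (d * s l.length)) (A <| · :: l))

namespace IsScaledScheme

variable {s : ℕ → ℝ} {c d : ℝ} {A : List β → Set E}

theorem exists_mem_branch (hA : IsScaledScheme s c d A) (u : ℕ → β) :
    ∃ x, ∀ n, x ∈ A (res u n) := by
  have hanti (n : ℕ) : A (res u (n + 1)) ⊆ A (res u n) :=
    hA.iUnion_cons (res u n) ▸ subset_iUnion (fun b ↦ A (b :: res u n)) (u n)
  obtain ⟨x, hx⟩ := IsCompact.nonempty_iInter_of_sequence_nonempty_isCompact_isClosed _ hanti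
    (fun n ↦ hA.nonempty _) (hA.isCompact _) (fun n ↦ (hA.isCompact _).isClosed)
  exact ⟨x, mem_iInter.1 hx⟩

theorem exists_branch_of_mem (hA : IsScaledScheme s c d A) {x : E} (hx : x ∈ A []) :
    ∃ u : ℕ → β, ∀ n, x ∈ A (res u n) := by
  have hstep (l : {l // x ∈ A l}) : ∃ b, x ∈ A (b :: l) := by
    simpa only [← hA.iUnion_cons l, mem_iUnion] using l.2
  choose b hb using hstep
  let branch (n : ℕ) : {l // x ∈ A l} := n.rec ⟨[], hx⟩ fun _ l ↦ ⟨b l :: l, hb l⟩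
  have hres (n : ℕ) : res (fun k ↦ b (branch k)) n = (branch n).1 := by
    induction n with
    | zero => rfl
    | succ n ih => rw [res_succ, ih]
  exact ⟨fun k ↦ b (branch k), fun n ↦ by rw [hres]; exact (branch n).2⟩

theorem eq_of_mem_branch (hA : IsScaledScheme s c d A) (hs : Tendsto s atTop (𝓝 0)) {u : ℕ → β}
    {x y : E} (hx : ∀ n, x ∈ A (res u n)) (hy : ∀ n, y ∈ A (res u n)) : x = y := by
  have hle (n : ℕ) : dist x y ≤ c * s n := by
    simpa only [res_length] using hA.dist_le _ x (hx n) y (hy n)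
  have hlim : Tendsto (fun n ↦ c * s n) atTop (𝓝 0) := by simpa using hs.const_mul c
  exact dist_le_zero.1 (ge_of_tendsto' hlim hle)

theorem isScaledCoding (hA : IsScaledScheme s c d A) (hd : 0 < d) {f : (ℕ → β) → E}
    (hf : ∀ u n, f u ∈ A (res u n)) : IsScaledCoding s f := by
  refine ⟨c, d, hd, fun u v huv ↦ ?_⟩
  set n := firstDiff u v
  have hres : res v n = res u n := res_eq_res.2 fun i hi ↦ (apply_eq_of_lt_firstDiff hi).symm
  have hsep := hA.separated (res u n) (apply_firstDiff_ne huv) (f u) (hf u (n + 1)) (f v)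
    (hres ▸ hf v (n + 1))
  have hle := hA.dist_le (res u n) (f u) (hf u n) (f v) (hres ▸ hf v n)
  rw [res_length] at hsep hle
  exact ⟨hsep, hle⟩

theorem exists_isScaledCoding (hA : IsScaledScheme s c d A) (hd : 0 < d)
    (hs : Tendsto s atTop (𝓝 0)) :
    ∃ f : (ℕ → β) → E, IsScaledCoding s f ∧ range f = A [] := by
  choose f hf using hA.exists_mem_branch
  refine ⟨f, hA.isScaledCoding hd hf, Subset.antisymm ?_ fun x hx ↦ ?_⟩
  · rintro _ ⟨u, rfl⟩
    exact hf u 0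
  · obtain ⟨u, hu⟩ := hA.exists_branch_of_mem hx
    exact ⟨u, hA.eq_of_mem_branch hs (hf u) hu⟩

end IsScaledScheme

/-- `G n` is a collection of compact sets of diameter at most `c * s n`, each of which is the union
of two sets from `G (n + 1)` at distance at least `d * s n`. -/
structure IsSplittingFamily (s : ℕ → ℝ) (c d : ℝ) (G : ℕ → Set (Set E)) : Prop where
  nonempty (n : ℕ) (Y : Set E) : Y ∈ G n → Y.Nonempty
  isCompact (n : ℕ) (Y : Set E) : Y ∈ G n → IsCompact Y
  dist_le (n : ℕ) (Y : Set E) : Y ∈ G n → ∀ x ∈ Y, ∀ y ∈ Y, dist x y ≤ c * s n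
  exists_split (n : ℕ) (Y : Set E) : Y ∈ G n → ∃ Y₀ ∈ G (n + 1), ∃ Y₁ ∈ G (n + 1),
    Y = Y₀ ∪ Y₁ ∧ SeparatedBy (d * s n) Y₀ Y₁

namespace IsSplittingFamily

variable {s : ℕ → ℝ} {c d : ℝ} {G : ℕ → Set (Set E)} {X : Set E}

theorem exists_isScaledScheme (hG : IsSplittingFamily s c d G) (hX : X ∈ G 0) :
    ∃ A : List Bool → Set E, IsScaledScheme s c d A ∧ A [] = X := by
  choose! Y₀ hY₀ Y₁ hY₁ hunion hsep using hG.exists_split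
  let A (l : List Bool) : Set E :=
    l.rec X fun b l Y ↦ cond b (Y₀ l.length Y) (Y₁ l.length Y)
  have hA (l : List Bool) : A l ∈ G l.length := by
    induction l with
    | nil => exact hX
    | cons b l ih =>
      cases b
      · exact hY₁ _ _ ih
      · exact hY₀ _ _ ih
  refine ⟨A, ⟨fun l ↦ hG.nonempty _ _ (hA l), fun l ↦ hG.isCompact _ _ (hA l),
    fun l ↦ hG.dist_le _ _ (hA l), fun l ↦ ?_, fun l ↦ ?_⟩, rfl⟩
  · exact union_eq_iUnion.symm.trans (hunion _ _ (hA l)).symm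
  · exact pairwise_on_bool.2 (hsep _ _ (hA l))

theorem exists_isScaledCoding (hG : IsSplittingFamily s c d G) (hX : X ∈ G 0) (hd : 0 < d)
    (hs : Tendsto s atTop (𝓝 0)) :
    ∃ f : (ℕ → Bool) → E, IsScaledCoding s f ∧ range f = X := by
  obtain ⟨A, hA, rfl⟩ := hG.exists_isScaledScheme hX
  exact hA.exists_isScaledCoding hd hs

end IsSplittingFamily

end Coding

section Digits

variable {q M a b : ℤ} {S : Set ℤ}

/-- The digits at scale `ρ / 3` describing the same set as the digits `S` at scale `ρ`; see
`cantorTranslates_eq_refineDigits`. -/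
def refineDigits (q : ℤ) (S : Set ℤ) : Set ℤ :=
  (3 * ·) '' S ∪ (3 * · + 2 * q) '' S

/-- `S` and `T` are so far apart that intervals of length `q` placed at them stay disjoint. -/
def FarApart (q : ℤ) (S T : Set ℤ) : Prop :=
  ∀ s ∈ S, ∀ t ∈ T, q < |s - t|

/-- `S` consists of two integers, possibly equal, at distance at most `M`. -/
def IsDigitPair (M : ℤ) (S : Set ℤ) : Prop :=
  ∃ a b, |a - b| ≤ M ∧ S = {a, b}

theorem IsDigitPair.mono {N : ℤ} (hS : IsDigitPair M S) (h : M ≤ N) : IsDigitPair N S :=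
  hS.imp fun _ ↦ Exists.imp fun _ ↦ And.imp_left h.trans'

theorem IsDigitPair.finite (hS : IsDigitPair M S) : S.Finite := by
  obtain ⟨a, b, -, rfl⟩ := hS
  exact toFinite _

theorem IsDigitPair.nonempty (hS : IsDigitPair M S) : S.Nonempty := by
  obtain ⟨a, b, -, rfl⟩ := hS
  exact insert_nonempty _ _

theorem IsDigitPair.abs_sub_le (hS : IsDigitPair M S) : ∀ s ∈ S, ∀ t ∈ S, |s - t| ≤ M := by
  obtain ⟨a, b, hab, rfl⟩ := hS
  grind

theorem exists_refineDigits_pair_eq_union (hq : 0 < q) (h : 3 * |a - b| ≠ q) :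
    ∃ U V, IsDigitPair (5 * q) U ∧ IsDigitPair (5 * q) V ∧
      refineDigits q {a, b} = U ∪ V ∧ FarApart q U V := by
  wlog hab : a ≤ b generalizing a b
  · rw [pair_comm]
    exact this (abs_sub_comm a b ▸ h) (le_of_not_ge hab)
  rw [abs_sub_comm, abs_of_nonneg (sub_nonneg.2 hab)] at h
  simp only [refineDigits, image_pair, FarApart, lt_abs]
  rcases lt_or_gt_of_ne h with hnear | hnear
  · refine ⟨{3 * a, 3 * b}, {3 * a + 2 * q, 3 * b + 2 * q}, ⟨_, _, ?_, rfl⟩, ⟨_, _, ?_, rfl⟩,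
      rfl, ?_⟩ <;> grind
  rcases le_or_gt (b - a) q with hmid | hfar
  · refine ⟨{3 * a, 3 * b + 2 * q}, {3 * b, 3 * a + 2 * q}, ⟨_, _, ?_, rfl⟩, ⟨_, _, ?_, rfl⟩,
      ?_, ?_⟩ <;> grind
  · refine ⟨{3 * a, 3 * a + 2 * q}, {3 * b, 3 * b + 2 * q}, ⟨_, _, ?_, rfl⟩, ⟨_, _, ?_, rfl⟩,
      ?_, ?_⟩ <;> grind

/-- `S` is the union of two far apart digit pairs, all of its elements being within distance
`M` of each other. -/
def IsDigitQuad (q M : ℤ) (S : Set ℤ) : Prop :=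
  (∃ U V, IsDigitPair M U ∧ IsDigitPair M V ∧ S = U ∪ V ∧ FarApart q U V) ∧
    ∀ s ∈ S, ∀ t ∈ S, |s - t| ≤ M

theorem IsDigitQuad.mono {N : ℤ} (hS : IsDigitQuad q M S) (h : M ≤ N) : IsDigitQuad q N S := by
  obtain ⟨⟨U, V, hU, hV, rfl, hUV⟩, hdiam⟩ := hS
  exact ⟨⟨U, V, hU.mono h, hV.mono h, rfl, hUV⟩, fun s hs t ht ↦ (hdiam s hs t ht).trans h⟩

theorem IsDigitQuad.finite (hS : IsDigitQuad q M S) : S.Finite := by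
  obtain ⟨⟨U, V, hU, hV, rfl, -⟩, -⟩ := hS
  exact hU.finite.union hV.finite

theorem IsDigitQuad.nonempty (hS : IsDigitQuad q M S) : S.Nonempty := by
  obtain ⟨⟨U, V, hU, -, rfl, -⟩, -⟩ := hS
  exact hU.nonempty.inl

theorem exists_refineDigits_refineDigits_pair_eq_union (hq : 0 < q) (h : 3 * |a - b| = q) :
    ∃ S T, IsDigitQuad q (11 * q) S ∧ IsDigitQuad q (11 * q) T ∧
      refineDigits q (refineDigits q {a, b}) = S ∪ T ∧ FarApart q S T := by
  wlog hab : a ≤ b generalizing a b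
  · rw [pair_comm]
    exact this (abs_sub_comm a b ▸ h) (le_of_not_ge hab)
  rw [abs_sub_comm, abs_of_nonneg (sub_nonneg.2 hab)] at h
  -- As `9 * b = 9 * a + 3 * q`, the digits are `9 * a + k * q` with `k = 0, 2, 3, 5, 6, 8, 9, 11`.
  refine ⟨{9 * a, 9 * a + 11 * q} ∪ {9 * a + 2 * q, 9 * a + 3 * q},
    {9 * a + 5 * q, 9 * a + 6 * q} ∪ {9 * a + 8 * q, 9 * a + 9 * q},
    ⟨⟨_, _, ⟨_, _, ?_, rfl⟩, ⟨_, _, ?_, rfl⟩, rfl, ?_⟩, ?_⟩,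
    ⟨⟨_, _, ⟨_, _, ?_, rfl⟩, ⟨_, _, ?_, rfl⟩, rfl, ?_⟩, ?_⟩, ?_, ?_⟩
  all_goals simp only [refineDigits, image_union, image_pair, FarApart, lt_abs, abs_le]
  all_goals grind

end Digits

section CantorTranslates

variable {q M : ℤ} {ρ : ℝ} {S T : Set ℤ}

/-- The union over `m ∈ S` of the copies `ρ * (q * C + m)` of the Cantor set `C`. -/
def cantorTranslates (q : ℤ) (ρ : ℝ) (S : Set ℤ) : Set ℝ :=
  image2 (fun x (m : ℤ) ↦ ρ * (q * x + m)) cantorSet S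

theorem cantorTranslates_union :
    cantorTranslates q ρ (S ∪ T) = cantorTranslates q ρ S ∪ cantorTranslates q ρ T :=
  image2_union_right

theorem cantorTranslates_eq_refineDigits :
    cantorTranslates q ρ S = cantorTranslates q (ρ / 3) (refineDigits q S) := by
  unfold cantorTranslates refineDigits
  conv_lhs => rw [cantorSet_eq_union_halves]
  rw [image2_union_left, image2_union_right]
  simp only [image2_image_left, image2_image_right]
  congr 1 <;> refine image2_congr fun x _ m _ ↦ ?_ <;> (push_cast; ring)

theorem cantorTranslates_nonempty (hS : S.Nonempty) : (cantorTranslates q ρ S).Nonempty :=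
  Nonempty.image2 ⟨0, zero_mem_cantorSet⟩ hS

theorem isCompact_cantorTranslates (hS : S.Finite) : IsCompact (cantorTranslates q ρ S) := by
  rw [cantorTranslates, ← iUnion_image_right]
  exact hS.isCompact_biUnion fun m _ ↦ isCompact_cantorSet.image (by fun_prop)

theorem abs_dist_sub_le_of_mem_cantorSet {q ρ x y : ℝ} (hq : 0 ≤ q) (hρ : 0 ≤ ρ)
    (hx : x ∈ cantorSet) (hy : y ∈ cantorSet) (s t : ℝ) :
    |dist (ρ * (q * x + s)) (ρ * (q * y + t)) - ρ * dist s t| ≤ ρ * q := by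
  obtain ⟨hx₀, hx₁⟩ := cantorSet_subset_unitInterval hx
  obtain ⟨hy₀, hy₁⟩ := cantorSet_subset_unitInterval hy
  have hxy : |x - y| ≤ 1 := abs_sub_le_iff.2 ⟨by linarith, by linarith⟩
  have hscale : ρ * dist s t = |ρ * (s - t)| := by rw [Real.dist_eq, abs_mul, abs_of_nonneg hρ]
  rw [Real.dist_eq, hscale]
  calc _ ≤ |ρ * (q * x + s) - ρ * (q * y + t) - ρ * (s - t)| := abs_abs_sub_abs_le _ _
    _ = |ρ * q * (x - y)| := by ring_nf
    _ = ρ * q * |x - y| := by rw [abs_mul, abs_of_nonneg (mul_nonneg hρ hq)]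
    _ ≤ ρ * q := mul_le_of_le_one_right (mul_nonneg hρ hq) hxy

theorem dist_le_of_mem_cantorTranslates (hq : 0 ≤ q) (hρ : 0 ≤ ρ)
    (hS : ∀ s ∈ S, ∀ t ∈ S, |s - t| ≤ M) :
    ∀ x ∈ cantorTranslates q ρ S, ∀ y ∈ cantorTranslates q ρ S, dist x y ≤ (q + M) * ρ := by
  rintro _ ⟨x, hx, s, hs, rfl⟩ _ ⟨y, hy, t, ht, rfl⟩
  have hdigits : dist (s : ℝ) t ≤ M := by rw [Real.dist_eq]; exact_mod_cast hS s hs t ht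
  have hdist := abs_dist_sub_le_of_mem_cantorSet (Int.cast_nonneg hq) hρ hx hy s t
  linarith [(abs_le.1 hdist).2, mul_le_mul_of_nonneg_left hdigits hρ]

theorem FarApart.separatedBy_cantorTranslates (h : FarApart q S T) (hq : 0 ≤ q) (hρ : 0 ≤ ρ) :
    SeparatedBy ρ (cantorTranslates q ρ S) (cantorTranslates q ρ T) := by
  rintro _ ⟨x, hx, s, hs, rfl⟩ _ ⟨y, hy, t, ht, rfl⟩
  have hdigits : (q + 1 : ℝ) ≤ dist (s : ℝ) t := by
    rw [Real.dist_eq]; exact_mod_cast h s hs t ht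
  have hdist := abs_dist_sub_le_of_mem_cantorSet (Int.cast_nonneg hq) hρ hx hy s t
  linarith [(abs_le.1 hdist).1, mul_le_mul_of_nonneg_left hdigits hρ]

end CantorTranslates

section CantorFamily

variable {q M : ℤ} {ρ : ℝ} {Y : Set ℝ}

/-- The sets obtained at scale `ρ` when splitting digit pairs. Quads are placed one scale lower:
they occur halfway through the two-step refinement of a pair at distance `q / 3`. -/
def cantorFamily (q M : ℤ) (ρ : ℝ) : Set (Set ℝ) :=
  cantorTranslates q ρ '' {S | IsDigitPair M S} ∪
    cantorTranslates q (ρ / 3) '' {S | IsDigitQuad q M S}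

theorem exists_digits_of_mem_cantorFamily (hρ : 0 ≤ ρ) (hY : Y ∈ cantorFamily q M ρ) :
    ∃ σ S, 0 ≤ σ ∧ σ ≤ ρ ∧ S.Finite ∧ S.Nonempty ∧ (∀ s ∈ S, ∀ t ∈ S, |s - t| ≤ M) ∧
      cantorTranslates q σ S = Y := by
  rcases hY with ⟨S, hS, rfl⟩ | ⟨S, hS, rfl⟩
  · exact ⟨ρ, S, hρ, le_rfl, hS.finite, hS.nonempty, hS.abs_sub_le, rfl⟩
  · exact ⟨ρ / 3, S, by positivity, by linarith, hS.finite, hS.nonempty, hS.2, rfl⟩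

theorem exists_split_of_mem_cantorFamily (hq : 0 < q) (hM : 11 * q ≤ M) (hρ : 0 ≤ ρ)
    (hY : Y ∈ cantorFamily q M ρ) :
    ∃ Y₀ ∈ cantorFamily q M (ρ / 3), ∃ Y₁ ∈ cantorFamily q M (ρ / 3),
      Y = Y₀ ∪ Y₁ ∧ SeparatedBy (ρ / 3 / 3) Y₀ Y₁ := by
  have hρ₁ : 0 ≤ ρ / 3 := by positivity
  have hρ₂ : ρ / 3 / 3 ≤ ρ / 3 := by linarith
  rcases hY with ⟨_, ⟨a, b, -, rfl⟩, rfl⟩ | ⟨_, ⟨⟨U, V, hU, hV, rfl, hUV⟩, -⟩, rfl⟩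
  · by_cases h : 3 * |a - b| = q
    · obtain ⟨S, T, hS, hT, hST, hfar⟩ := exists_refineDigits_refineDigits_pair_eq_union hq h
      refine ⟨_, Or.inr ⟨S, hS.mono hM, rfl⟩, _, Or.inr ⟨T, hT.mono hM, rfl⟩, ?_,
        hfar.separatedBy_cantorTranslates hq.le (by positivity)⟩
      rw [cantorTranslates_eq_refineDigits, cantorTranslates_eq_refineDigits, hST,
        cantorTranslates_union]
    · obtain ⟨U, V, hU, hV, hUV, hfar⟩ := exists_refineDigits_pair_eq_union hq h
      have hM' : 5 * q ≤ M := by linarith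
      refine ⟨_, Or.inl ⟨U, hU.mono hM', rfl⟩, _, Or.inl ⟨V, hV.mono hM', rfl⟩, ?_,
        (hfar.separatedBy_cantorTranslates hq.le hρ₁).mono hρ₂⟩
      rw [cantorTranslates_eq_refineDigits, hUV, cantorTranslates_union]
  · exact ⟨_, Or.inl ⟨U, hU, rfl⟩, _, Or.inl ⟨V, hV, rfl⟩, cantorTranslates_union,
      (hUV.separatedBy_cantorTranslates hq.le hρ₁).mono hρ₂⟩

theorem isSplittingFamily_cantorFamily (hq : 0 < q) (hM : 11 * q ≤ M) (hρ : 0 ≤ ρ) :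
    IsSplittingFamily (fun n ↦ ρ / 3 ^ n) (q + M) (1 / 9)
      (fun n ↦ cantorFamily q M (ρ / 3 ^ n)) where
  nonempty n Y hY := by
    obtain ⟨σ, S, -, -, -, hS, -, rfl⟩ := exists_digits_of_mem_cantorFamily (by positivity) hY
    exact cantorTranslates_nonempty hS
  isCompact n Y hY := by
    obtain ⟨σ, S, -, -, hS, -, -, rfl⟩ := exists_digits_of_mem_cantorFamily (by positivity) hY
    exact isCompact_cantorTranslates hS
  dist_le n Y hY x hx y hy := by
    obtain ⟨σ, S, hσ, hσρ, -, -, hS, rfl⟩ :=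
      exists_digits_of_mem_cantorFamily (by positivity) hY
    have hqM : (0 : ℝ) ≤ q + M := mod_cast (by linarith : 0 ≤ q + M)
    exact (dist_le_of_mem_cantorTranslates hq.le hσ hS x hx y hy).trans (by gcongr)
  exists_split n Y hY := by
    have hscale : ρ / 3 ^ (n + 1) = ρ / 3 ^ n / 3 := by rw [pow_succ, div_div]
    have hgap : 1 / 9 * (ρ / 3 ^ n) = ρ / 3 ^ n / 3 / 3 := by ring
    rw [hscale, hgap]
    exact exists_split_of_mem_cantorFamily hq hM (by positivity) hY

theorem lipschitzEquivalent_cantorTranslates_pair (hq : 0 < q) (hρ : 0 < ρ) (a b a' b' : ℤ) :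
    LipschitzEquivalent (cantorTranslates q ρ {a, b}) (cantorTranslates q ρ {a', b'}) := by
  let M := max (11 * q) (max |a - b| |a' - b'|)
  have hM : 11 * q ≤ M := le_max_left _ _
  have hfamily := isSplittingFamily_cantorFamily hq hM hρ.le
  have hs : Tendsto (fun n : ℕ ↦ ρ / 3 ^ n) atTop (𝓝 0) :=
    tendsto_const_nhds.div_atTop (tendsto_pow_atTop_atTop_of_one_lt (by norm_num))
  have hcoding (a b : ℤ) (hab : |a - b| ≤ M) :
      ∃ f : (ℕ → Bool) → ℝ, IsScaledCoding (fun n ↦ ρ / 3 ^ n) f ∧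
        range f = cantorTranslates q ρ {a, b} :=
    hfamily.exists_isScaledCoding (Or.inl ⟨_, ⟨a, b, hab, rfl⟩, by rw [pow_zero, div_one]⟩)
      (by norm_num) hs
  obtain ⟨f, hf, hfrange⟩ := hcoding a b ((le_max_left _ _).trans (le_max_right _ _))
  obtain ⟨g, hg, hgrange⟩ := hcoding a' b' ((le_max_right _ _).trans (le_max_right _ _))
  rw [← hfrange, ← hgrange]
  exact hf.lipschitzEquivalent_range hg fun n ↦ by positivity

end CantorFamily

theorem cantorTranslates_inv_pair {q : ℤ} (hq : q ≠ 0) (p : ℤ) :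
    cantorTranslates q (q : ℝ)⁻¹ {0, p} = cantorSet ∪ (fun x ↦ x + (p / q : ℝ)) '' cantorSet := by
  have hq' : (q : ℝ) ≠ 0 := Int.cast_ne_zero.2 hq
  simp [cantorTranslates, image2_insert_right, mul_add, hq', div_eq_inv_mul]

theorem stmt8_general (α : ℚ) :
    LipschitzEquivalent (cantorSet ∪ (fun x => x + (α : ℝ)) '' cantorSet) cantorSet := by
  have hq : 0 < (α.den : ℤ) := Int.natCast_pos.2 α.den_pos
  have hα : (α.num : ℝ) / ((α.den : ℤ) : ℝ) = α := by rw [Int.cast_natCast, ← Rat.cast_def]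
  have h := lipschitzEquivalent_cantorTranslates_pair hq (inv_pos.2 (Int.cast_pos.2 hq)) 0 α.num 0 0
  rw [cantorTranslates_inv_pair hq.ne', cantorTranslates_inv_pair hq.ne', hα] at h
  simpa only [Int.cast_zero, zero_div, add_zero, image_id', union_self] using h

theorem stmt8 (α : ℚ) (h0 : 0 < α) (h1 : α ≤ 1) :
    LipschitzEquivalent (cantorSet ∪ (fun x => x + (α : ℝ)) '' cantorSet) cantorSet :=
  stmt8_general α
end

section
/- Let N ≥ 2 and ℓ ≥ 1 be integers. Let X be the set of all finite words over the alphabet {1,…,N} (including the empty word o), with tree distance d(x, y) = |x| + |y| − 2·|x ∧ y|, where |x| is the length of x and x ∧ y is the longest common prefix of x and y. Let X̂ be the union of ℓ copies of X: its vertex set is {ô} ∪ ({1,…,ℓ} × X), with distance d̂ defined by d̂(ô, (i, u)) = |u| + 1, d̂((i, u), (i, v)) = d(u, v), and d̂((i, u), (j, v)) = |u| + |v| + 2 for i ≠ j. Then there exists a bijection σ from X ∖ {o} onto X̂ ∖ {ô} such that |d̂(σ(x), σ(y)) − d(x, y)| ≤ ⌊ℓ/N⌋ + 1 for all x, y ∈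 X ∖ {o}. -/
/-- Length of the longest common prefix of two lists. -/
def lcpLen {α : Type*} [DecidableEq α] : List α → List α → ℕ
  | a :: x, b :: y => if a = b then lcpLen x y + 1 else 0
  | _, _ => 0

/-- The graph distance in the rooted tree of finite words:
`d(x, y) = |x| + |y| - 2 |x ∧ y|`, where `x ∧ y` is the longest common prefix. -/
def treeDist {α : Type*} [DecidableEq α] (x y : List α) : ℕ :=
  x.length + y.length - 2 * lcpLen x y

/-- The distance on the union `X̂` of `ℓ` copies of the tree `X` of finite words
over `Fin N`, joined at a new root `ô = none`. -/
def unionDist {N ℓ : ℕ} :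
    Option (Fin ℓ × List (Fin N)) → Option (Fin ℓ × List (Fin N)) → ℕ
  | none, none => 0
  | none, some (_, u) => u.length + 1
  | some (_, u), none => u.length + 1
  | some (i, u), some (j, v) =>
      if i = j then treeDist u v else u.length + v.length + 2

/-!
Cutting `X` and `X̂` at their roots leaves forests of `N` and of `ℓ` copies of the `N`-ary tree, so
it suffices to compare forests with different numbers of trees. Prune a tree of the subtrees at
some children `j ∈ P` of its root, making each of them a new tree. For a fixed letter `z ∉ P`,
what remains is identified with a full tree by the shift `zⁿj ↦ zⁿ⁺¹j` for `j ∈ P`. Distances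
change by at most `1` if only one tree is pruned, which creates up to `N - 1` new trees, and by at
most `2` if all trees are, which multiplies their number by up to `N`. For `ℓ < N`, a single step
of the first kind leads from `ℓ` trees to `N`; for `ℓ ≥ N`, steps of the second kind, preceded by
one of the first kind if `⌊ℓ/N⌋ + 1` is odd, lead from `N` trees to `ℓ`.
-/

theorem lcpLen_comm {α : Type*} [DecidableEq α] (x y : List α) : lcpLen x y = lcpLen y x := by
  induction x generalizing y with
  | nil => cases y <;> rfl
  | cons a x ih => cases y <;> simp [lcpLen, ih, eq_comm]

theorem lcpLen_eq_zero_of_head?_ne {α : Type*} [DecidableEq α] {x y : List α}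
    (h : x.head? ≠ y.head?) : lcpLen x y = 0 := by
  cases x <;> cases y <;> simp_all [lcpLen]

section TreeDist

variable {α : Type*} [DecidableEq α]

theorem treeDist_comm (x y : List α) : treeDist x y = treeDist y x := by
  rw [treeDist, treeDist, lcpLen_comm, Nat.add_comm x.length]

theorem treeDist_nil_right (x : List α) : treeDist x [] = x.length := by
  cases x <;> simp [treeDist, lcpLen]

theorem treeDist_cons_cons_self (a : α) (x y : List α) :
    treeDist (a :: x) (a :: y) = treeDist x y := by
  simp only [treeDist, lcpLen, List.length_cons, if_true]
  omega

theorem treeDist_of_head?_ne {x y : List α} (h : x.head? ≠ y.head?) :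
    treeDist x y = x.length + y.length := by
  rw [treeDist, lcpLen_eq_zero_of_head?_ne h, Nat.mul_zero, Nat.sub_zero]

-- If `y` also starts with `z`, cancelling that letter exchanges the roles of `x` and `y`.
theorem abs_treeDist_cons_sub_treeDist_le {z : α} : ∀ x y : List α,
    x.find? (· ≠ z) ≠ y.find? (· ≠ z) → |(treeDist (z :: x) y : ℤ) - treeDist x y| ≤ 1
  | x, [], _ => by simp [treeDist_nil_right]
  | x, b :: y, h => by
    by_cases hb : b = z
    · rw [hb, treeDist_cons_cons_self, treeDist_comm x y, treeDist_comm x, abs_sub_comm]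
      exact abs_treeDist_cons_sub_treeDist_le y x (by simpa [hb] using h.symm)
    · have head_ne : x.head? ≠ (b :: y).head? := by
        cases x <;> grind
      have head_ne' : (z :: x).head? ≠ (b :: y).head? := by
        simpa using Ne.symm hb
      simp [treeDist_of_head?_ne head_ne, treeDist_of_head?_ne head_ne']
termination_by x y => x.length + y.length

end TreeDist

section ShiftRay

variable {α : Type*} [DecidableEq α] {z : α} {P : Set α}

/-- The union of the subtrees rooted at the words `zⁿj` with `n ≥ 0` and `j ∈ P`, `j ≠ z`: the
branches with labels in `P` that hang off the ray `o, z, zz, …`. -/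
def rayBranches (z : α) (P : Set α) : Set (List α) :=
  {w | ∃ j ∈ P, w.find? (· ≠ z) = some j}

theorem cons_mem_rayBranches {w : List α} : z :: w ∈ rayBranches z P ↔ w ∈ rayBranches z P := by
  simp [rayBranches]

theorem mem_rayBranches_of_head? (hz : z ∉ P) {w : List α} {j : α} (hj : j ∈ P)
    (hw : w.head? = some j) : w ∈ rayBranches z P := by
  obtain ⟨v, rfl⟩ := List.head?_eq_some_iff.1 hw
  have : j ≠ z := ne_of_mem_of_not_mem hj hz
  exact ⟨j, hj, by simp [this]⟩

open Classical in
/-- The self-map of the tree that moves the subtree at `zⁿj` to `zⁿ⁺¹j` for all `n ≥ 0` and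
`j ∈ P`, `j ≠ z`. For `z ∉ P` its image is the tree pruned of the subtrees at the
children `j ∈ P` of the root. -/
noncomputable def shiftRay (z : α) (P : Set α) (w : List α) : List α :=
  if w ∈ rayBranches z P then z :: w else w

theorem shiftRay_of_mem {w : List α} (h : w ∈ rayBranches z P) : shiftRay z P w = z :: w :=
  if_pos h

theorem shiftRay_of_notMem {w : List α} (h : w ∉ rayBranches z P) : shiftRay z P w = w :=
  if_neg h

theorem shiftRay_mem_rayBranches {w : List α} :
    shiftRay z P w ∈ rayBranches z P ↔ w ∈ rayBranches z P := by
  unfold shiftRay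
  split_ifs
  · exact cons_mem_rayBranches
  · rfl

theorem shiftRay_injective : Function.Injective (shiftRay z P) := by
  intro u v h
  have mem_iff : u ∈ rayBranches z P ↔ v ∈ rayBranches z P := by
    rw [← shiftRay_mem_rayBranches, h, shiftRay_mem_rayBranches]
  by_cases hu : u ∈ rayBranches z P
  · rw [shiftRay_of_mem hu, shiftRay_of_mem (mem_iff.1 hu)] at h
    exact List.tail_eq_of_cons_eq h
  · rwa [shiftRay_of_notMem hu, shiftRay_of_notMem (mt mem_iff.2 hu)] at h

theorem head?_shiftRay_ne (hz : z ∉ P) {j : α} (hj : j ∈ P) (w : List α) :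
    (shiftRay z P w).head? ≠ some j := by
  by_cases hw : w ∈ rayBranches z P
  · rw [shiftRay_of_mem hw]
    simpa using (ne_of_mem_of_not_mem hj hz).symm
  · rw [shiftRay_of_notMem hw]
    exact mt (mem_rayBranches_of_head? hz hj) hw

theorem exists_shiftRay_eq {w : List α} (hw : ∀ j ∈ P, w.head? ≠ some j) :
    ∃ u, shiftRay z P u = w := by
  by_cases h : w ∈ rayBranches z P
  · obtain ⟨j, hj, hfind⟩ := id h
    rcases w with _ | ⟨a, w⟩
    · simp at hfind
    · obtain rfl : a = z := by
        by_contra ha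
        obtain rfl : a = j := by simpa [ha] using hfind
        exact hw a hj rfl
      exact ⟨w, shiftRay_of_mem (cons_mem_rayBranches.1 h)⟩
  · exact ⟨w, shiftRay_of_notMem h⟩

theorem length_shiftRay_eq_or (w : List α) :
    (shiftRay z P w).length = w.length ∨
      (shiftRay z P w).length = w.length + 1 ∧ P.Nonempty := by
  by_cases hw : w ∈ rayBranches z P
  · exact Or.inr ⟨by rw [shiftRay_of_mem hw, List.length_cons], hw.imp fun _ h => h.1⟩
  · exact Or.inl (by rw [shiftRay_of_notMem hw])

theorem abs_treeDist_shiftRay_sub_treeDist_le (u v : List α) :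
    |(treeDist (shiftRay z P u) (shiftRay z P v) : ℤ) - treeDist u v| ≤ 1 := by
  have find_ne {x y : List α} (hx : x ∈ rayBranches z P) (hy : y ∉ rayBranches z P) :
      x.find? (· ≠ z) ≠ y.find? (· ≠ z) := by
    obtain ⟨j, hj, hfind⟩ := hx
    exact fun h => hy ⟨j, hj, h ▸ hfind⟩
  by_cases hu : u ∈ rayBranches z P <;> by_cases hv : v ∈ rayBranches z P
  · simp [shiftRay_of_mem hu, shiftRay_of_mem hv, treeDist_cons_cons_self]
  · rw [shiftRay_of_mem hu, shiftRay_of_notMem hv]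
    exact abs_treeDist_cons_sub_treeDist_le u v (find_ne hu hv)
  · rw [shiftRay_of_notMem hu, shiftRay_of_mem hv, treeDist_comm u, treeDist_comm u]
    exact abs_treeDist_cons_sub_treeDist_le v u (find_ne hv hu)
  · simp [shiftRay_of_notMem hu, shiftRay_of_notMem hv]

end ShiftRay

section ForestDist

variable {I α : Type*} [DecidableEq I] [DecidableEq α]

/-- The distance on the forest `I × List α` of copies of the tree of words, one for each index
in `I`, when their roots are joined to a common new vertex (which is not part of the forest). -/
def forestDist (p q : I × List α) : ℕ :=
  if p.1 = q.1 then treeDist p.2 q.2 else p.2.length + q.2.length + 2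

theorem forestDist_self_left (t : I) (u v : List α) :
    forestDist (t, u) (t, v) = treeDist u v :=
  if_pos rfl

theorem forestDist_of_fst_ne {p q : I × List α} (h : p.1 ≠ q.1) :
    forestDist p q = p.2.length + q.2.length + 2 :=
  if_neg h

theorem forestDist_comm (p q : I × List α) : forestDist p q = forestDist q p := by
  simp only [forestDist, eq_comm (a := p.1), treeDist_comm p.2, Nat.add_comm p.2.length]

theorem treeDist_cons_cons (a b : α) (u v : List α) :
    treeDist (a :: u) (b :: v) = forestDist (a, u) (b, v) := by
  by_cases h : a = b
  · subst h
    rw [treeDist_cons_cons_self, forestDist_self_left]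
  · rw [treeDist_of_head?_ne (by simpa using h), forestDist_of_fst_ne h]
    simp only [List.length_cons]
    omega

end ForestDist

section Regraft

variable {I α : Type*} [DecidableEq α] {z : α} {S : Set (I × α)}

/-- The identification of the forest in which every subtree `(t, j) ∈ S`, rooted at the child `j`
of the root of the tree `t`, has been detached (the tree `inr (t, j)`) and the gaps have been
closed along the rays `o, z, zz, …` (the trees `inl t`) with the original forest. -/
noncomputable def regraft (z : α) (S : Set (I × α)) : (I ⊕ S) × List α → I × List α
  | (.inl t, w) => (t, shiftRay z (Prod.mk t ⁻¹' S) w)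
  | (.inr p, w) => (p.1.1, p.1.2 :: w)

theorem regraft_bijective (hz : ∀ t, (t, z) ∉ S) : Function.Bijective (regraft z S) := by
  constructor
  · have inl_ne_inr (t : I) (u : List α) (p : S) (v : List α) :
        regraft z S (.inl t, u) ≠ regraft z S (.inr p, v) := by
      obtain ⟨⟨s, j⟩, hj⟩ := p
      simp only [regraft, ne_eq, Prod.mk.injEq, not_and]
      rintro rfl h
      exact head?_shiftRay_ne (P := Prod.mk t ⁻¹' S) (hz t) hj u (by rw [h, List.head?_cons])
    rintro ⟨t | p, u⟩ ⟨s | q, v⟩ h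
    · simp only [regraft, Prod.mk.injEq] at h
      obtain ⟨rfl, h⟩ := h
      rw [shiftRay_injective h]
    · exact absurd h (inl_ne_inr t u q v)
    · exact absurd h.symm (inl_ne_inr s v p u)
    · simp only [regraft, Prod.mk.injEq, List.cons.injEq] at h
      obtain ⟨hfst, hsnd, rfl⟩ := h
      rw [Subtype.ext (Prod.ext hfst hsnd)]
  · rintro ⟨t, w⟩
    by_cases h : ∃ j, (t, j) ∈ S ∧ w.head? = some j
    · obtain ⟨j, hj, hw⟩ := h
      obtain ⟨v, rfl⟩ := List.head?_eq_some_iff.1 hw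
      exact ⟨(.inr ⟨(t, j), hj⟩, v), rfl⟩
    · obtain ⟨u, rfl⟩ := exists_shiftRay_eq (z := z) (P := Prod.mk t ⁻¹' S) (w := w)
        fun j hj hw => h ⟨j, hj, hw⟩
      exact ⟨(.inl t, u), rfl⟩

theorem length_regraft_eq_or (x : (I ⊕ S) × List α) :
    (regraft z S x).2.length = x.2.length ∨
      (regraft z S x).2.length = x.2.length + 1 ∧ ∃ j, ((regraft z S x).1, j) ∈ S := by
  obtain ⟨t | p, w⟩ := x
  · exact length_shiftRay_eq_or w
  · exact Or.inr ⟨rfl, p.1.2, p.2⟩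

theorem fst_ne_of_fst_regraft_ne {x y : (I ⊕ S) × List α}
    (h : (regraft z S x).1 ≠ (regraft z S y).1) : x.1 ≠ y.1 := by
  intro hxy
  obtain ⟨a, u⟩ := x
  obtain ⟨b, v⟩ := y
  obtain rfl : a = b := hxy
  cases a <;> exact h rfl

variable [DecidableEq I]

theorem abs_forestDist_regraft_inl_inr_sub_le (hz : ∀ t, (t, z) ∉ S) {t : I} {j : α}
    (hj : (t, j) ∈ S) (u v : List α) :
    |(forestDist (regraft z S (.inl t, u)) (regraft z S (.inr ⟨(t, j), hj⟩, v)) : ℤ) -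
      forestDist ((.inl t, u) : (I ⊕ S) × List α) (.inr ⟨(t, j), hj⟩, v)| ≤ 1 := by
  have head_ne : (shiftRay z (Prod.mk t ⁻¹' S) u).head? ≠ (j :: v).head? :=
    head?_shiftRay_ne (P := Prod.mk t ⁻¹' S) (hz t) hj u
  have length_shift := length_shiftRay_eq_or (z := z) (P := Prod.mk t ⁻¹' S) u
  have dist_source : forestDist ((.inl t, u) : (I ⊕ S) × List α) (.inr ⟨(t, j), hj⟩, v) =
      u.length + v.length + 2 := forestDist_of_fst_ne Sum.inl_ne_inr
  simp only [regraft, forestDist_self_left, treeDist_of_head?_ne head_ne, List.length_cons,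
    dist_source, abs_le]
  omega

theorem abs_forestDist_regraft_sub_le_one_of_fst_eq (hz : ∀ t, (t, z) ∉ S)
    {x y : (I ⊕ S) × List α} (h : (regraft z S x).1 = (regraft z S y).1) :
    |(forestDist (regraft z S x) (regraft z S y) : ℤ) - forestDist x y| ≤ 1 := by
  obtain ⟨t | ⟨⟨t, j⟩, hj⟩, u⟩ := x <;> obtain ⟨s | ⟨⟨s, k⟩, hk⟩, v⟩ := y <;>
    obtain rfl : t = s := h
  · simp only [regraft, forestDist_self_left]
    exact abs_treeDist_shiftRay_sub_treeDist_le u v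
  · exact abs_forestDist_regraft_inl_inr_sub_le hz hk u v
  · rw [forestDist_comm, forestDist_comm (Sum.inr _, u)]
    exact abs_forestDist_regraft_inl_inr_sub_le hz hj v u
  · have : forestDist (regraft z S (.inr ⟨(t, j), hj⟩, u)) (regraft z S (.inr ⟨(t, k), hk⟩, v)) =
        forestDist ((.inr ⟨(t, j), hj⟩, u) : (I ⊕ S) × List α) (.inr ⟨(t, k), hk⟩, v) := by
      simp [regraft, treeDist_cons_cons, forestDist]
    simp [this]

theorem abs_forestDist_regraft_sub_le_two (hz : ∀ t, (t, z) ∉ S) (x y : (I ⊕ S) × List α) :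
    |(forestDist (regraft z S x) (regraft z S y) : ℤ) - forestDist x y| ≤ 2 := by
  by_cases h : (regraft z S x).1 = (regraft z S y).1
  · exact (abs_forestDist_regraft_sub_le_one_of_fst_eq hz h).trans one_le_two
  · have hx := length_regraft_eq_or x (z := z)
    have hy := length_regraft_eq_or y (z := z)
    rw [forestDist_of_fst_ne h, forestDist_of_fst_ne (fst_ne_of_fst_regraft_ne h), abs_le]
    omega

theorem abs_forestDist_regraft_sub_le_one (hz : ∀ t, (t, z) ∉ S)
    (hS : ∀ p ∈ S, ∀ q ∈ S, p.1 = q.1) (x y : (I ⊕ S) × List α) :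
    |(forestDist (regraft z S x) (regraft z S y) : ℤ) - forestDist x y| ≤ 1 := by
  by_cases h : (regraft z S x).1 = (regraft z S y).1
  · exact abs_forestDist_regraft_sub_le_one_of_fst_eq hz h
  · rw [forestDist_of_fst_ne h, forestDist_of_fst_ne (fst_ne_of_fst_regraft_ne h), abs_le]
    rcases length_regraft_eq_or x (z := z) with hx | ⟨hx, j, hj⟩
    · have hy := length_regraft_eq_or y (z := z)
      omega
    · rcases length_regraft_eq_or y (z := z) with hy | ⟨_, k, hk⟩
      · omega
      · exact absurd (hS _ hj _ hk) h

end Regraft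

/-- The forests of trees of words over `α` indexed by `I` and by `J` admit a bijection that
changes distances by at most `D`. -/
def ForestSimilar (α I J : Type*) [DecidableEq α] [DecidableEq I] [DecidableEq J] (D : ℕ) : Prop :=
  ∃ e : I × List α ≃ J × List α, ∀ x y, |(forestDist (e x) (e y) : ℤ) - forestDist x y| ≤ D

namespace ForestSimilar

variable {α I J K : Type*} [DecidableEq α] [DecidableEq I] [DecidableEq J] [DecidableEq K]
  {D D' : ℕ}

theorem symm : ForestSimilar α I J D → ForestSimilar α J I D := by
  rintro ⟨e, he⟩
  refine ⟨e.symm, fun x y => ?_⟩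
  simpa [abs_sub_comm] using he (e.symm x) (e.symm y)

theorem trans : ForestSimilar α I J D → ForestSimilar α J K D' →
    ForestSimilar α I K (D + D') := by
  rintro ⟨e, he⟩ ⟨f, hf⟩
  refine ⟨e.trans f, fun x y => ?_⟩
  rw [Nat.cast_add, add_comm (D : ℤ)]
  exact (abs_sub_le _ _ _).trans (add_le_add (hf (e x) (e y)) (he x y))

theorem mono (h : ForestSimilar α I J D) (hD : D ≤ D') : ForestSimilar α I J D' :=
  h.imp fun _ he x y => (he x y).trans (by exact_mod_cast hD)

theorem of_equiv (f : I ≃ J) : ForestSimilar α I J 0 :=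
  ⟨f.prodCongr (.refl _), fun x y => by simp [forestDist]⟩

theorem sum_two {z : α} {S : Set (I × α)} (hz : ∀ t, (t, z) ∉ S) :
    ForestSimilar α (I ⊕ S) I 2 :=
  ⟨.ofBijective _ (regraft_bijective hz), abs_forestDist_regraft_sub_le_two hz⟩

theorem sum_one {z : α} {S : Set (I × α)} (hz : ∀ t, (t, z) ∉ S)
    (hS : ∀ p ∈ S, ∀ q ∈ S, p.1 = q.1) : ForestSimilar α (I ⊕ S) I 1 :=
  ⟨.ofBijective _ (regraft_bijective hz), abs_forestDist_regraft_sub_le_one hz hS⟩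

end ForestSimilar

theorem le_min_mul {n a c : ℕ} (hc : 0 < c) (h : n ≤ a * c) : n ≤ min n a * c := by
  rw [min_mul_of_nonneg _ _ c.zero_le]
  exact le_min (Nat.le_mul_of_pos_right n hc) h

theorem exists_subset_nonempty_sum_equiv {I J β : Type*} [Fintype I] [Fintype J] {T : Finset β}
    (h : Fintype.card I ≤ Fintype.card J) (hT : Fintype.card J ≤ Fintype.card I + T.card) :
    ∃ S : Set β, S ⊆ T ∧ Nonempty (I ⊕ S ≃ J) := by
  obtain ⟨S, hST, hS⟩ := Finset.exists_subset_card_eq (Nat.sub_le_iff_le_add'.2 hT)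
  refine ⟨S, by exact_mod_cast hST, ⟨Fintype.equivOfCardEq ?_⟩⟩
  simp only [Fintype.card_sum, Finset.coe_sort_coe, Fintype.card_coe, hS]
  omega

namespace ForestSimilar

variable {α I J : Type*} [DecidableEq α] [Fintype α] [DecidableEq I] [Fintype I]
  [DecidableEq J] [Fintype J]

theorem of_card_lt_card_add_card [Nonempty I] (h : Fintype.card I ≤ Fintype.card J)
    (h' : Fintype.card J < Fintype.card I + Fintype.card α) : ForestSimilar α I J 1 := by
  obtain ⟨z⟩ : Nonempty α := Fintype.card_pos_iff.1 (by omega)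
  obtain ⟨t⟩ := ‹Nonempty I›
  have card_T : (({t} : Finset I) ×ˢ Finset.univ.erase z).card = Fintype.card α - 1 := by
    simp [Finset.card_erase_of_mem]
  obtain ⟨S, hS, ⟨e⟩⟩ := exists_subset_nonempty_sum_equiv h
    (T := {t} ×ˢ Finset.univ.erase z) (by omega)
  have fst_eq (p : I × α) (hp : p ∈ S) : p.1 = t :=
    Finset.mem_singleton.1 (Finset.mem_product.1 (hS hp)).1
  have hz (s : I) : (s, z) ∉ S := fun hs =>
    (Finset.mem_erase.1 (Finset.mem_product.1 (hS hs)).2).1 rfl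
  exact (sum_one hz fun p hp q hq => (fst_eq p hp).trans (fst_eq q hq).symm).symm.trans
    (of_equiv e)

theorem of_card_le_card_mul_card [Nonempty α] (h : Fintype.card I ≤ Fintype.card J)
    (h' : Fintype.card J ≤ Fintype.card I * Fintype.card α) : ForestSimilar α I J 2 := by
  obtain ⟨z⟩ := ‹Nonempty α›
  have card_T : ((Finset.univ : Finset I) ×ˢ Finset.univ.erase z).card =
      Fintype.card I * Fintype.card α - Fintype.card I := by
    simp [Finset.card_erase_of_mem, Nat.mul_sub]
  obtain ⟨S, hS, ⟨e⟩⟩ := exists_subset_nonempty_sum_equiv h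
    (T := Finset.univ ×ˢ Finset.univ.erase z) (by omega)
  have hz (s : I) : (s, z) ∉ S := fun hs =>
    (Finset.mem_erase.1 (Finset.mem_product.1 (hS hs)).2).1 rfl
  exact (sum_two hz).symm.trans (of_equiv e)

theorem fin_of_le_mul_card_pow [Nonempty α] {m n : ℕ} (j : ℕ) (h : m ≤ n)
    (h' : n ≤ m * Fintype.card α ^ j) :
    ForestSimilar α (Fin m) (Fin n) (2 * j) := by
  induction j generalizing m with
  | zero =>
    obtain rfl : m = n := h.antisymm (by simpa using h')
    exact of_equiv (.refl _)
  | succ j ih =>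
    have card_pos : 0 < Fintype.card α := Fintype.card_pos
    have first_step : ForestSimilar α (Fin m) (Fin (min n (m * Fintype.card α))) 2 :=
      of_card_le_card_mul_card (by simpa using ⟨h, Nat.le_mul_of_pos_right m card_pos⟩) (by simp)
    have remaining_steps : ForestSimilar α (Fin (min n (m * Fintype.card α))) (Fin n) (2 * j) := by
      refine ih (min_le_left _ _) (le_min_mul (pow_pos card_pos j) ?_)
      rwa [mul_assoc, ← pow_succ']
    exact (first_step.trans remaining_steps).mono (by omega)

end ForestSimilar

theorem two_mul_add_one_mul_le {N j : ℕ} (hN : 2 ≤ N) (hj : j ≠ 0) :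
    (2 * j + 1) * N ≤ (2 * N - 1) * N ^ j := by
  obtain ⟨i, rfl⟩ := Nat.exists_eq_succ_of_ne_zero hj
  have lt_pow : i < N ^ i := Nat.lt_pow_self hN
  calc (2 * (i + 1) + 1) * N ≤ (3 * N ^ i) * N := by gcongr; omega
    _ ≤ ((2 * N - 1) * N ^ i) * N := by gcongr; omega
    _ = (2 * N - 1) * N ^ (i + 1) := by ring

theorem forestSimilar_fin {N ℓ : ℕ} (hN : 2 ≤ N) (hℓ : 1 ≤ ℓ) :
    ForestSimilar (Fin N) (Fin N) (Fin ℓ) (ℓ / N + 1) := by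
  have : NeZero N := ⟨by omega⟩
  have : NeZero ℓ := ⟨by omega⟩
  have ℓ_lt : ℓ < (ℓ / N + 1) * N :=
    (Nat.div_lt_iff_lt_mul (by omega)).1 (Nat.lt_succ_self _)
  rcases lt_or_ge ℓ N with hℓN | hNℓ
  · have : ForestSimilar (Fin N) (Fin ℓ) (Fin N) 1 :=
      .of_card_lt_card_add_card (by simpa using hℓN.le)
        (by simp only [Fintype.card_fin]; omega)
    exact this.symm.mono (Nat.le_add_left _ _)
  have quot_pos : 0 < ℓ / N := Nat.div_pos hNℓ (by omega)
  rcases Nat.even_or_odd' (ℓ / N + 1) with ⟨j, hj | hj⟩ <;> rw [hj] at ℓ_lt ⊢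
  · refine .fin_of_le_mul_card_pow j hNℓ (ℓ_lt.le.trans ?_)
    calc 2 * j * N ≤ N * j * N := by gcongr
      _ ≤ N ^ j * N := by gcongr; exact Nat.mul_le_pow (by omega) j
      _ = N * Fintype.card (Fin N) ^ j := by rw [Fintype.card_fin, mul_comm]
  · have first_step : ForestSimilar (Fin N) (Fin N) (Fin (min ℓ (2 * N - 1))) 1 :=
      .of_card_lt_card_add_card (by simp only [Fintype.card_fin]; omega)
        (by simp only [Fintype.card_fin]; omega)
    have remaining_steps :
        ForestSimilar (Fin N) (Fin (min ℓ (2 * N - 1))) (Fin ℓ) (2 * j) := by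
      refine .fin_of_le_mul_card_pow j (min_le_left _ _) (le_min_mul (by positivity) ?_)
      rw [Fintype.card_fin]
      exact ℓ_lt.le.trans (two_mul_add_one_mul_le hN (by omega))
    exact (first_step.trans remaining_steps).mono (by omega)

/-- Nonempty words as pairs of a first letter and the remaining word. -/
def consEquiv (α : Type*) : α × List α ≃ {x : List α // x ≠ []} where
  toFun p := ⟨p.1 :: p.2, List.cons_ne_nil _ _⟩
  invFun x := (x.1.head x.2, x.1.tail)
  left_inv _ := rfl
  right_inv x := Subtype.ext (List.cons_head_tail x.2)

/-- The elements of `Option β` other than `none` as elements of `β`. -/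
def someEquiv (β : Type*) : β ≃ {y : Option β // y ≠ none} :=
  (Equiv.optionIsSomeEquiv β).symm.trans
    (Equiv.subtypeEquivRight fun _ => Option.isSome_iff_ne_none)

theorem stmt15 (N ℓ : ℕ) (hN : 2 ≤ N) (hℓ : 1 ≤ ℓ) :
    ∃ σ : {x : List (Fin N) // x ≠ []} →
          {y : Option (Fin ℓ × List (Fin N)) // y ≠ none},
      Function.Bijective σ ∧
      ∀ x y : {x : List (Fin N) // x ≠ []},
        |(unionDist (σ x).val (σ y).val : ℤ) - (treeDist x.val y.val : ℤ)| ≤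
          ((ℓ / N : ℕ) : ℤ) + 1 := by
  obtain ⟨e, he⟩ := forestSimilar_fin hN hℓ
  let σ := (consEquiv (Fin N)).symm.trans (e.trans (someEquiv _))
  refine ⟨σ, σ.bijective, fun x y => ?_⟩
  obtain ⟨⟨a, u⟩, rfl⟩ := (consEquiv _).surjective x
  obtain ⟨⟨b, v⟩, rfl⟩ := (consEquiv _).surjective y
  have dist_source : treeDist (a :: u) (b :: v) = forestDist (a, u) (b, v) :=
    treeDist_cons_cons a b u v
  have dist_target : unionDist (some (e (a, u))) (some (e (b, v))) =
      forestDist (e (a, u)) (e (b, v)) := rfl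
  have distortion := he (a, u) (b, v)
  rw [← dist_source, ← dist_target, Nat.cast_add_one] at distortion
  exact distortion
end
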